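/- Let T ⊂ ℝ³ be a triangle with Euclidean diameter h, and let g be a C² Riemannian metric on a neighborhood of T. Define the discrete area Â(T) = (1/2)√(det γ_{αβ}(1/3,1/3)), where γ is the pullback of g under the affine parametrization of T over the standard triangle, and let A(T) = ∫_{T_S} √(det γ_{αβ}) dx be the true area. Then there is a constant c₀ depending only on bounds for g and its first two derivatives on T such that |A(T) − Â(T)| ≤ c₀ h² A(T). -/

import Mathlib

open Matrix

/-! Replace the edge vectors of `T` by a Euclidean-orthonormal pair `e, f` spanning the same plane:
this multiplies `det γ` by a constant, so the estimate, being homogeneous, only has to be proved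
for `D y = g_y(e, e) g_y(f, f) - g_y(e, f) g_y(f, e)`, uniformly in the shape of the triangle. Now
`D` is a polynomial in the entries of `g`, so on `T` it is affine up to `O(h²)`, and ellipticity
bounds it below; hence `√D` too is affine up to `O(h²)`. Affine functions integrate exactly by the
centroid rule, and the lower bound on `√D` turns the absolute error into a relative one. -/

open MeasureTheory Metric

section CentroidRule

/-- The standard triangle `T_S`, the parameter domain of every triangle. -/
def stdTriangle : Set (ℝ × ℝ) := {x | 0 ≤ x.1 ∧ 0 ≤ x.2 ∧ x.1 + x.2 ≤ 1}

/-- The affine parametrization `F_T` of the triangle with vertices `p₀, p₁, p₂` over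
`stdTriangle`. -/
def triangleParam {E : Type*} [AddCommGroup E] [Module ℝ E] (p₀ p₁ p₂ : E) (x : ℝ × ℝ) : E :=
  (1 - x.1 - x.2) • p₀ + x.1 • p₁ + x.2 • p₂

theorem isClosed_stdTriangle : IsClosed stdTriangle :=
  (isClosed_le continuous_const continuous_fst).inter
    ((isClosed_le continuous_const continuous_snd).inter
      (isClosed_le (continuous_fst.add continuous_snd) continuous_const))

theorem isCompact_stdTriangle : IsCompact stdTriangle :=
  isCompact_Icc.of_isClosed_subset (s := Set.Icc ((0, 0) : ℝ × ℝ) (1, 1)) isClosed_stdTriangle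
    fun _ ⟨h₁, h₂, h₃⟩ => ⟨⟨h₁, h₂⟩, by linarith, by linarith⟩

theorem centroid_mem_stdTriangle : ((1 / 3, 1 / 3) : ℝ × ℝ) ∈ stdTriangle := by
  norm_num [stdTriangle]

theorem triangleParam_mem_convexHull {E : Type*} [AddCommGroup E] [Module ℝ E] {p₀ p₁ p₂ : E}
    {x : ℝ × ℝ} (hx : x ∈ stdTriangle) :
    triangleParam p₀ p₁ p₂ x ∈ convexHull ℝ {p₀, p₁, p₂} := by
  obtain ⟨h₁, h₂, h₃⟩ := hx
  have hsum := (convex_convexHull ℝ {p₀, p₁, p₂}).sum_mem (t := Finset.univ)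
    (w := ![1 - x.1 - x.2, x.1, x.2]) (z := ![p₀, p₁, p₂])
    (fun i _ => by fin_cases i <;> simp <;> linarith)
    (by simp only [Fin.sum_univ_three, cons_val]; ring)
    (fun i _ => subset_convexHull ℝ _ (by fin_cases i <;> simp))
  simpa [Fin.sum_univ_three, triangleParam] using hsum

theorem setIntegral_stdTriangle {E : Type*} [NormedAddCommGroup E] [NormedSpace ℝ E]
    {f : ℝ × ℝ → E} (hf : ContinuousOn f stdTriangle) :
    ∫ x in stdTriangle, f x = ∫ s in (0 : ℝ)..1, ∫ t in (0 : ℝ)..(1 - s), f (s, t) := by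
  have hmeas := isClosed_stdTriangle.measurableSet
  have slice (s : ℝ) : ∫ t, stdTriangle.indicator f (s, t) =
      (Set.Icc (0 : ℝ) 1).indicator (fun s => ∫ t in (0 : ℝ)..(1 - s), f (s, t)) s := by
    by_cases hs : s ∈ Set.Icc (0 : ℝ) 1
    · have hpre : Prod.mk s ⁻¹' stdTriangle = Set.Icc 0 (1 - s) := by
        ext t
        simp only [stdTriangle, Set.mem_preimage, Set.mem_ofPred_eq, Set.mem_Icc, hs.1, true_and,
          le_sub_iff_add_le']
      have hind (t : ℝ) : stdTriangle.indicator f (s, t) =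
          (Set.Icc 0 (1 - s)).indicator (fun t => f (s, t)) t := by
        rw [← hpre]; rfl
      rw [Set.indicator_of_mem hs, intervalIntegral.integral_of_le (by linarith [hs.2]),
        ← integral_Icc_eq_integral_Ioc, ← integral_indicator measurableSet_Icc]
      simp only [hind]
    · have hout (t : ℝ) : (s, t) ∉ stdTriangle := fun ⟨h₁, h₂, h₃⟩ => hs ⟨h₁, by linarith⟩
      simp only [Set.indicator_of_notMem (hout _), Set.indicator_of_notMem hs, integral_zero]
  have hint := (hf.integrableOn_compact isCompact_stdTriangle).integrable_indicator
    (μ := volume) hmeas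
  rw [← integral_indicator hmeas, Measure.volume_eq_prod,
    integral_prod _ (by rwa [← Measure.volume_eq_prod]), integral_congr_ae (.of_forall slice),
    integral_indicator measurableSet_Icc, integral_Icc_eq_integral_Ioc,
    ← intervalIntegral.integral_of_le zero_le_one]

theorem volume_real_stdTriangle : volume.real stdTriangle = 1 / 2 := by
  have h := setIntegral_stdTriangle (f := fun _ => (1 : ℝ)) (by fun_prop)
  have hhalf : ∫ t in (0 : ℝ)..1, (1 - t) = 1 / 2 := by
    rw [intervalIntegral.integral_comp_sub_left (fun t => t)]; norm_num
  simpa [hhalf] using h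

theorem integral_fst_stdTriangle : ∫ x in stdTriangle, x.1 = 1 / 6 := by
  rw [setIntegral_stdTriangle (by fun_prop)]
  simp only [intervalIntegral.integral_const, smul_eq_mul, sub_zero, sub_mul, one_mul, ← sq]
  rw [intervalIntegral.integral_sub (by simp) (by simp), integral_id, integral_pow]
  norm_num

theorem integral_snd_stdTriangle : ∫ x in stdTriangle, x.2 = 1 / 6 := by
  rw [setIntegral_stdTriangle (by fun_prop)]
  simp only [integral_id]
  rw [intervalIntegral.integral_comp_sub_left (fun t => (t ^ 2 - 0 ^ 2) / 2)]
  norm_num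

theorem integral_triangleParam {E : Type*} [NormedAddCommGroup E] [NormedSpace ℝ E]
    [CompleteSpace E] (p₀ p₁ p₂ : E) :
    ∫ x in stdTriangle, triangleParam p₀ p₁ p₂ x =
      volume.real stdTriangle • triangleParam p₀ p₁ p₂ (1 / 3, 1 / 3) := by
  have hint {w : ℝ × ℝ → E} (hw : Continuous w) : IntegrableOn w stdTriangle :=
    hw.continuousOn.integrableOn_compact isCompact_stdTriangle
  have hparam (x : ℝ × ℝ) :
      triangleParam p₀ p₁ p₂ x = p₀ + x.1 • (p₁ - p₀) + x.2 • (p₂ - p₀) := by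
    unfold triangleParam; module
  simp only [hparam]
  rw [integral_add (hint (by fun_prop)) (hint (by fun_prop)),
    integral_add (hint (by fun_prop)) (hint (by fun_prop)), integral_smul_const,
    integral_smul_const, integral_fst_stdTriangle, integral_snd_stdTriangle, setIntegral_const,
    volume_real_stdTriangle]
  module

theorem abs_integral_comp_sub_le {α : Type*} [MeasurableSpace α] {μ : Measure α}
    [IsFiniteMeasure μ] {E : Type*} [NormedAddCommGroup E] [NormedSpace ℝ E] [CompleteSpace E]
    {F : α → E} {φ : E → ℝ} {c : E} {L : E →L[ℝ] ℝ} {ε : ℝ} (hF : Integrable F μ)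
    (hφ : Integrable (fun x => φ (F x)) μ) (hc : ∫ x, F x ∂μ = μ.real Set.univ • c)
    (hL : ∀ᵐ x ∂μ, |φ (F x) - φ c - L (F x - c)| ≤ ε) :
    |∫ x, φ (F x) ∂μ - μ.real Set.univ * φ c| ≤ ε * μ.real Set.univ := by
  have hFc : Integrable (fun x => F x - c) μ := hF.sub (integrable_const c)
  have hzero : ∫ x, L (F x - c) ∂μ = 0 := by
    rw [L.integral_comp_comm hFc, integral_sub hF (integrable_const c), hc, integral_const,
      sub_self, map_zero]
  have herror : ∫ x, (φ (F x) - φ c - L (F x - c)) ∂μ =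
      ∫ x, φ (F x) ∂μ - μ.real Set.univ * φ c := by
    rw [integral_sub (f := fun x => φ (F x) - φ c) (hφ.sub (integrable_const _))
      (L.integrable_comp hFc), integral_sub hφ (integrable_const _), hzero, sub_zero,
      integral_const, smul_eq_mul]
  rw [← herror]
  exact norm_integral_le_of_norm_le_const (f := fun x => φ (F x) - φ c - L (F x - c)) hL

theorem abs_integral_comp_sub_le_mul_integral {α : Type*} [MeasurableSpace α] {μ : Measure α}
    [IsFiniteMeasure μ] {E : Type*} [NormedAddCommGroup E] [NormedSpace ℝ E] [CompleteSpace E]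
    {F : α → E} {φ : E → ℝ} {c : E} {L : E →L[ℝ] ℝ} {ε k : ℝ} (hF : Integrable F μ)
    (hφ : Integrable (fun x => φ (F x)) μ) (hc : ∫ x, F x ∂μ = μ.real Set.univ • c)
    (hL : ∀ᵐ x ∂μ, |φ (F x) - φ c - L (F x - c)| ≤ ε) (hε : 0 ≤ ε) (hk : 0 < k)
    (hlow : ∀ᵐ x ∂μ, k ≤ φ (F x)) :
    |∫ x, φ (F x) ∂μ - μ.real Set.univ * φ c| ≤ ε / k * ∫ x, φ (F x) ∂μ := by
  have hmass : μ.real Set.univ * k ≤ ∫ x, φ (F x) ∂μ := by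
    simpa only [integral_const, smul_eq_mul] using integral_mono_ae (integrable_const k) hφ hlow
  calc |∫ x, φ (F x) ∂μ - μ.real Set.univ * φ c|
      ≤ ε * μ.real Set.univ := abs_integral_comp_sub_le hF hφ hc hL
    _ = ε / k * (μ.real Set.univ * k) := by field_simp
    _ ≤ ε / k * ∫ x, φ (F x) ∂μ := by gcongr

end CentroidRule

section SecondOrder

theorem norm_sub_sub_fderiv_le {E F : Type*} [NormedAddCommGroup E] [NormedSpace ℝ E]
    [NormedAddCommGroup F] [NormedSpace ℝ F] {f : E → F} {x y : E} {K : ℝ}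
    (hf : ∀ z ∈ segment ℝ x y, ContDiffAt ℝ 2 f z)
    (hK : ∀ z ∈ segment ℝ x y, ‖iteratedFDeriv ℝ 2 f z‖ ≤ K) :
    ‖f y - f x - fderiv ℝ f x (y - x)‖ ≤ K * ‖y - x‖ ^ 2 := by
  have hx := left_mem_segment ℝ x y
  have hy := right_mem_segment ℝ x y
  have hconv := convex_segment (𝕜 := ℝ) x y
  have hK₀ : 0 ≤ K := (norm_nonneg _).trans (hK x hx)
  have hsecond (z) (hz : z ∈ segment ℝ x y) : ‖fderiv ℝ (fderiv ℝ f) z‖ ≤ K := by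
    rw [← norm_iteratedFDeriv_one, norm_iteratedFDeriv_fderiv]
    exact hK z hz
  have hfirst (z) (hz : z ∈ segment ℝ x y) : ‖fderiv ℝ f z - fderiv ℝ f x‖ ≤ K * ‖y - x‖ :=
    calc ‖fderiv ℝ f z - fderiv ℝ f x‖
        ≤ K * ‖z - x‖ := hconv.norm_image_sub_le_of_norm_fderiv_le
          (fun w hw => ((hf w hw).fderiv_right (m := 1) le_rfl).differentiableAt one_ne_zero)
          hsecond hx hz
      _ ≤ K * ‖y - x‖ := by gcongr; exact norm_sub_le_of_mem_segment hz
  calc ‖f y - f x - fderiv ℝ f x (y - x)‖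
      ≤ K * ‖y - x‖ * ‖y - x‖ := hconv.norm_image_sub_le_of_norm_fderiv_le'
        (fun w hw => (hf w hw).differentiableAt two_ne_zero) hfirst hx hy
    _ = K * ‖y - x‖ ^ 2 := by ring

variable {E : Type*} [NormedAddCommGroup E] [NormedSpace ℝ E] {f g : E → ℝ} {s : Set E}
  {A B B' K h k : ℝ}

/-- Up to a factor `B`, `f` obeys on `s` the estimates which Taylor's formula gives for a function
with bounded `C²` norm on a convex set of diameter `h`: boundedness, oscillation `O(h)`, and
affinity up to `O(h²)` about each point. Unlike bounds on derivatives, these pass to products and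
square roots by elementary algebra. -/
structure SecondOrderBoundOn (f : E → ℝ) (s : Set E) (B h : ℝ) : Prop where
  abs_le : ∀ x ∈ s, |f x| ≤ B
  abs_sub_le : ∀ c ∈ s, ∀ x ∈ s, |f x - f c| ≤ B * h
  exists_linear : ∀ c ∈ s, ∃ L : E →L[ℝ] ℝ, ∀ x ∈ s, |f x - f c - L (x - c)| ≤ B * h ^ 2

namespace SecondOrderBoundOn

theorem of_contDiffAt (hs : Convex ℝ s) (hbdd : Bornology.IsBounded s)
    (hf : ∀ x ∈ s, ContDiffAt ℝ 2 f x) (h₀ : ∀ x ∈ s, |f x| ≤ K)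
    (h₁ : ∀ x ∈ s, ‖fderiv ℝ f x‖ ≤ K) (h₂ : ∀ x ∈ s, ‖iteratedFDeriv ℝ 2 f x‖ ≤ K) :
    SecondOrderBoundOn f s K (diam s) where
  abs_le := h₀
  abs_sub_le c hc x hx := by
    have hK : 0 ≤ K := (abs_nonneg _).trans (h₀ c hc)
    calc |f x - f c|
        ≤ K * ‖x - c‖ := hs.norm_image_sub_le_of_norm_fderiv_le
          (fun y hy => (hf y hy).differentiableAt two_ne_zero) h₁ hc hx
      _ ≤ K * diam s := by
          gcongr; rw [← dist_eq_norm]; exact dist_le_diam_of_mem hbdd hx hc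
  exists_linear c hc := ⟨fderiv ℝ f c, fun x hx => by
    have hK : 0 ≤ K := (abs_nonneg _).trans (h₀ c hc)
    have hseg := hs.segment_subset hc hx
    calc |f x - f c - fderiv ℝ f c (x - c)|
        ≤ K * ‖x - c‖ ^ 2 :=
          norm_sub_sub_fderiv_le (fun z hz => hf z (hseg hz)) fun z hz => h₂ z (hseg hz)
      _ ≤ K * diam s ^ 2 := by
          gcongr; rw [← dist_eq_norm]; exact dist_le_diam_of_mem hbdd hx hc⟩

theorem add (hf : SecondOrderBoundOn f s B h) (hg : SecondOrderBoundOn g s B' h) :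
    SecondOrderBoundOn (fun x => f x + g x) s (B + B') h where
  abs_le x hx := (abs_add_le _ _).trans (add_le_add (hf.abs_le x hx) (hg.abs_le x hx))
  abs_sub_le c hc x hx := by
    rw [add_sub_add_comm, add_mul]
    exact (abs_add_le _ _).trans (add_le_add (hf.abs_sub_le c hc x hx) (hg.abs_sub_le c hc x hx))
  exists_linear c hc := by
    obtain ⟨L, hL⟩ := hf.exists_linear c hc
    obtain ⟨L', hL'⟩ := hg.exists_linear c hc
    refine ⟨L + L', fun x hx => ?_⟩
    rw [_root_.add_apply, add_sub_add_comm, add_sub_add_comm, add_mul]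
    exact (abs_add_le _ _).trans (add_le_add (hL x hx) (hL' x hx))

theorem const_mul {a : ℝ} (hf : SecondOrderBoundOn f s B h) (ha : |a| ≤ A) :
    SecondOrderBoundOn (fun x => a * f x) s (A * B) h where
  abs_le x hx := by
    rw [abs_mul]
    exact mul_le_mul ha (hf.abs_le x hx) (abs_nonneg _) ((abs_nonneg _).trans ha)
  abs_sub_le c hc x hx := by
    rw [← mul_sub, abs_mul, mul_assoc]
    exact mul_le_mul ha (hf.abs_sub_le c hc x hx) (abs_nonneg _) ((abs_nonneg _).trans ha)
  exists_linear c hc := by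
    obtain ⟨L, hL⟩ := hf.exists_linear c hc
    refine ⟨a • L, fun x hx => ?_⟩
    rw [_root_.smul_apply, smul_eq_mul, ← mul_sub, ← mul_sub, abs_mul, mul_assoc]
    exact mul_le_mul ha (hL x hx) (abs_nonneg _) ((abs_nonneg _).trans ha)

theorem sub (hf : SecondOrderBoundOn f s B h) (hg : SecondOrderBoundOn g s B' h) :
    SecondOrderBoundOn (fun x => f x - g x) s (B + B') h := by
  simpa [sub_eq_add_neg] using hf.add (hg.const_mul (a := -1) (A := 1) (by simp))

theorem sum {ι : Type*} (t : Finset ι) {f : ι → E → ℝ} {B : ι → ℝ}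
    (hf : ∀ i ∈ t, SecondOrderBoundOn (f i) s (B i) h) :
    SecondOrderBoundOn (fun x => ∑ i ∈ t, f i x) s (∑ i ∈ t, B i) h := by
  induction t using Finset.cons_induction with
  | empty => exact ⟨by simp, by simp, fun c _ => ⟨0, by simp⟩⟩
  | cons i t hi ih =>
    simp only [Finset.sum_cons]
    exact (hf i (Finset.mem_cons_self i t)).add
      (ih fun j hj => hf j (Finset.mem_cons_of_mem hj))

theorem mul (hf : SecondOrderBoundOn f s B h) (hg : SecondOrderBoundOn g s B' h) :
    SecondOrderBoundOn (fun x => f x * g x) s (3 * (B * B')) h where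
  abs_le x hx := by
    have hB : 0 ≤ B := (abs_nonneg _).trans (hf.abs_le x hx)
    have hB' : 0 ≤ B' := (abs_nonneg _).trans (hg.abs_le x hx)
    calc |f x * g x| = |f x| * |g x| := abs_mul _ _
      _ ≤ B * B' := by gcongr; exacts [hf.abs_le x hx, hg.abs_le x hx]
      _ ≤ 3 * (B * B') := by nlinarith [mul_nonneg hB hB']
  abs_sub_le c hc x hx := by
    have hB : 0 ≤ B := (abs_nonneg _).trans (hf.abs_le x hx)
    have hB' : 0 ≤ B' := (abs_nonneg _).trans (hg.abs_le x hx)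
    have hdf := hf.abs_sub_le c hc x hx
    have hdg := hg.abs_sub_le c hc x hx
    have hBh : 0 ≤ B * h := (abs_nonneg _).trans hdf
    calc |f x * g x - f c * g c| = |(f x - f c) * g x + f c * (g x - g c)| := by ring_nf
      _ ≤ |f x - f c| * |g x| + |f c| * |g x - g c| := by
          simpa only [abs_mul] using abs_add_le ((f x - f c) * g x) (f c * (g x - g c))
      _ ≤ B * h * B' + B * (B' * h) := by
          gcongr; exacts [hg.abs_le x hx, hf.abs_le c hc]
      _ ≤ 3 * (B * B') * h := by nlinarith [mul_nonneg hBh hB']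
  exists_linear c hc := by
    obtain ⟨L, hL⟩ := hf.exists_linear c hc
    obtain ⟨L', hL'⟩ := hg.exists_linear c hc
    refine ⟨g c • L + f c • L', fun x hx => ?_⟩
    have hB : 0 ≤ B := (abs_nonneg _).trans (hf.abs_le x hx)
    have hBh : 0 ≤ B * h := (abs_nonneg _).trans (hf.abs_sub_le c hc x hx)
    have hsplit : f x * g x - f c * g c - (g c • L + f c • L') (x - c) =
        (f x - f c) * (g x - g c) + (f x - f c - L (x - c)) * g c
          + f c * (g x - g c - L' (x - c)) := by
      simp only [_root_.add_apply, _root_.smul_apply, smul_eq_mul]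
      ring
    calc |f x * g x - f c * g c - (g c • L + f c • L') (x - c)|
        ≤ |f x - f c| * |g x - g c| + |f x - f c - L (x - c)| * |g c|
          + |f c| * |g x - g c - L' (x - c)| := by
          rw [hsplit]
          simpa only [abs_mul] using abs_add_three ((f x - f c) * (g x - g c))
            ((f x - f c - L (x - c)) * g c) (f c * (g x - g c - L' (x - c)))
      _ ≤ B * h * (B' * h) + B * h ^ 2 * B' + B * (B' * h ^ 2) := by
          gcongr
          exacts [hf.abs_sub_le c hc x hx, hg.abs_sub_le c hc x hx, hL x hx, hg.abs_le c hc,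
            hf.abs_le c hc, hL' x hx]
      _ = 3 * (B * B') * h ^ 2 := by ring

end SecondOrderBoundOn

theorem abs_sqrt_sub_sqrt_sub_le {k p q : ℝ} (hk : 0 < k) (hp : k ^ 2 ≤ p) (hq : k ^ 2 ≤ q)
    (l : ℝ) :
    |√q - √p - l / (2 * √p)| ≤ |q - p - l| / (2 * k) + (q - p) ^ 2 / (8 * k ^ 3) := by
  have hkp : k ≤ √p := Real.le_sqrt_of_sq_le hp
  have hkq : k ≤ √q := Real.le_sqrt_of_sq_le hq
  have hsp : √p ^ 2 = p := Real.sq_sqrt ((sq_nonneg k).trans hp)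
  have hsq : √q ^ 2 = q := Real.sq_sqrt ((sq_nonneg k).trans hq)
  have hp₀ : 0 < √p := hk.trans_le hkp
  have hdiff : (√q - √p) ^ 2 ≤ (q - p) ^ 2 / (4 * k ^ 2) := by
    rw [le_div_iff₀ (by positivity)]
    calc (√q - √p) ^ 2 * (4 * k ^ 2) = (√q - √p) ^ 2 * (k + k) ^ 2 := by ring
      _ ≤ (√q - √p) ^ 2 * (√q + √p) ^ 2 := by gcongr
      _ = (√q ^ 2 - √p ^ 2) ^ 2 := by ring
      _ = (q - p) ^ 2 := by rw [hsp, hsq]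
  have hexpand : √q - √p - l / (2 * √p) = ((q - p - l) - (√q - √p) ^ 2) / (2 * √p) := by
    field_simp
    linear_combination hsq - hsp
  calc |√q - √p - l / (2 * √p)|
      = |(q - p - l) - (√q - √p) ^ 2| / (2 * √p) := by
        rw [hexpand, abs_div, abs_of_pos (by positivity : 0 < 2 * √p)]
    _ ≤ (|q - p - l| + (√q - √p) ^ 2) / (2 * k) := by
        gcongr
        exact (abs_sub _ _).trans_eq (by rw [abs_of_nonneg (sq_nonneg (√q - √p))])
    _ ≤ (|q - p - l| + (q - p) ^ 2 / (4 * k ^ 2)) / (2 * k) := by gcongr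
    _ = |q - p - l| / (2 * k) + (q - p) ^ 2 / (8 * k ^ 3) := by field_simp; ring

theorem SecondOrderBoundOn.exists_linear_sqrt {c : E} (hf : SecondOrderBoundOn f s B h)
    (hk : 0 < k) (hlow : ∀ x ∈ s, k ^ 2 ≤ f x) (hc : c ∈ s) :
    ∃ L : E →L[ℝ] ℝ, ∀ x ∈ s,
      |√(f x) - √(f c) - L (x - c)| ≤ (B / (2 * k) + B ^ 2 / (8 * k ^ 3)) * h ^ 2 := by
  obtain ⟨L, hL⟩ := hf.exists_linear c hc
  refine ⟨(2 * √(f c))⁻¹ • L, fun x hx => ?_⟩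
  have hsq : (f x - f c) ^ 2 ≤ (B * h) ^ 2 :=
    sq_le_sq.2 ((hf.abs_sub_le c hc x hx).trans (le_abs_self _))
  calc |√(f x) - √(f c) - ((2 * √(f c))⁻¹ • L) (x - c)|
      = |√(f x) - √(f c) - L (x - c) / (2 * √(f c))| := by
        rw [_root_.smul_apply, smul_eq_mul, inv_mul_eq_div]
    _ ≤ |f x - f c - L (x - c)| / (2 * k) + (f x - f c) ^ 2 / (8 * k ^ 3) :=
        abs_sqrt_sub_sqrt_sub_le hk (hlow c hc) (hlow x hx) _
    _ ≤ B * h ^ 2 / (2 * k) + (B * h) ^ 2 / (8 * k ^ 3) := by gcongr; exact hL x hx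
    _ = (B / (2 * k) + B ^ 2 / (8 * k ^ 3)) * h ^ 2 := by ring

end SecondOrder

section GramDeterminant

variable {ι : Type*} [Fintype ι]

/-- The determinant of the Gram matrix of the pair `u, v` with respect to the bilinear form with
matrix `G`. -/
def gramDet (G : Matrix ι ι ℝ) (u v : ι → ℝ) : ℝ :=
  (u ⬝ᵥ G *ᵥ u) * (v ⬝ᵥ G *ᵥ v) - (u ⬝ᵥ G *ᵥ v) * (v ⬝ᵥ G *ᵥ u)

theorem gramDet_smul_smul_add_smul (G : Matrix ι ι ℝ) (e f : ι → ℝ) (a b d : ℝ) :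
    gramDet G (a • e) (b • e + d • f) = (a * d) ^ 2 * gramDet G e f := by
  simp only [gramDet, mulVec_add, mulVec_smul, dotProduct_add, add_dotProduct, dotProduct_smul,
    smul_dotProduct, smul_eq_mul]
  ring

theorem exists_eq_smul_dotProduct_self_eq_one {u : ι → ℝ} (hu : u ≠ 0) :
    ∃ (a : ℝ) (e : ι → ℝ), a ≠ 0 ∧ e ⬝ᵥ e = 1 ∧ u = a • e := by
  have hpos : 0 < u ⬝ᵥ u := by
    simpa only [star_trivial] using dotProduct_star_self_pos_iff.2 hu
  have ha : √(u ⬝ᵥ u) ≠ 0 := (Real.sqrt_pos.2 hpos).ne'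
  refine ⟨√(u ⬝ᵥ u), (√(u ⬝ᵥ u))⁻¹ • u, ha, ?_, (smul_inv_smul₀ ha u).symm⟩
  rw [smul_dotProduct, dotProduct_smul, smul_eq_mul, smul_eq_mul, ← mul_assoc, ← mul_inv,
    Real.mul_self_sqrt hpos.le, inv_mul_cancel₀ (ne_of_gt hpos)]

-- Gram–Schmidt; the first alternative is the linear dependence of `u` and `v`.
theorem gramDet_eq_zero_or_exists_orthonormal (u v : ι → ℝ) :
    (∀ G, gramDet G u v = 0) ∨ ∃ (r : ℝ) (e f : ι → ℝ),
      e ⬝ᵥ e = 1 ∧ f ⬝ᵥ f = 1 ∧ e ⬝ᵥ f = 0 ∧ ∀ G, gramDet G u v = r ^ 2 * gramDet G e f := by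
  by_cases hu : u = 0
  · left; simp [hu, gramDet]
  obtain ⟨a, e, -, he, rfl⟩ := exists_eq_smul_dotProduct_self_eq_one hu
  obtain ⟨w, hv⟩ : ∃ w, v = (e ⬝ᵥ v) • e + w := ⟨v - (e ⬝ᵥ v) • e, by abel⟩
  have hew : e ⬝ᵥ w = 0 := by
    simpa [dotProduct_add, he] using congrArg (e ⬝ᵥ ·) hv
  by_cases hw₀ : w = 0
  · left
    intro G
    rw [hv, hw₀, ← zero_smul ℝ e, gramDet_smul_smul_add_smul]
    ring
  · right
    obtain ⟨d, f, hd, hf, rfl⟩ := exists_eq_smul_dotProduct_self_eq_one hw₀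
    refine ⟨a * d, e, f, he, hf, ?_, fun G => ?_⟩
    · simpa [hd] using hew
    · rw [hv, gramDet_smul_smul_add_smul]

theorem sq_le_gramDet_of_orthonormal {G : Matrix ι ι ℝ} {k : ℝ} (hk : 0 ≤ k)
    (hG : ∀ v, k * (v ⬝ᵥ v) ≤ v ⬝ᵥ G *ᵥ v) {e f : ι → ℝ}
    (he : e ⬝ᵥ e = 1) (hf : f ⬝ᵥ f = 1) (hef : e ⬝ᵥ f = 0) :
    k ^ 2 ≤ gramDet G e f := by
  have hfe : f ⬝ᵥ e = 0 := by rw [dotProduct_comm, hef]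
  have ha : k ≤ e ⬝ᵥ G *ᵥ e := by simpa [he] using hG e
  have hd : k ≤ f ⬝ᵥ G *ᵥ f := by simpa [hf] using hG f
  have hform (t : ℝ) : 0 ≤ (e ⬝ᵥ G *ᵥ e - k) * (t * t) + (e ⬝ᵥ G *ᵥ f + f ⬝ᵥ G *ᵥ e) * t +
      (f ⬝ᵥ G *ᵥ f - k) := by
    have h := hG (t • e + f)
    simp only [mulVec_add, mulVec_smul, dotProduct_add, add_dotProduct, dotProduct_smul,
      smul_dotProduct, smul_eq_mul, he, hf, hef, hfe] at h
    linarith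
  have hdiscrim := discrim_le_zero hform
  unfold discrim at hdiscrim
  unfold gramDet
  nlinarith [sq_nonneg (e ⬝ᵥ G *ᵥ f - f ⬝ᵥ G *ᵥ e), mul_nonneg hk (sub_nonneg.2 ha),
    mul_nonneg hk (sub_nonneg.2 hd)]

theorem abs_apply_le_one_of_dotProduct_self_eq_one {e : ι → ℝ} (he : e ⬝ᵥ e = 1) (i : ι) :
    |e i| ≤ 1 := by
  rw [← sq_le_one_iff_abs_le_one, ← he, sq]
  exact Finset.single_le_sum (f := fun i => e i * e i) (fun j _ => mul_self_nonneg _)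
    (Finset.mem_univ i)

theorem SecondOrderBoundOn.dotProduct_mulVec {E : Type*} [NormedAddCommGroup E]
    [NormedSpace ℝ E] {s : Set E} {G : E → Matrix ι ι ℝ} {B h : ℝ}
    (hG : ∀ i j, SecondOrderBoundOn (fun y => G y i j) s B h) {u v : ι → ℝ}
    (hu : ∀ i, |u i| ≤ 1) (hv : ∀ i, |v i| ≤ 1) :
    SecondOrderBoundOn (fun y => u ⬝ᵥ G y *ᵥ v) s (Fintype.card ι ^ 2 * B) h := by
  have hterm (i j : ι) : SecondOrderBoundOn (fun y => u i * (v j * G y i j)) s B h := by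
    simpa only [one_mul] using ((hG i j).const_mul (hv j)).const_mul (hu i)
  convert sum Finset.univ fun i _ => sum Finset.univ fun j _ => hterm i j using 1
  · ext y
    simp only [dotProduct, mulVec, Finset.mul_sum, mul_comm (v _)]
  · simp only [Finset.sum_const, Finset.card_univ, nsmul_eq_mul]
    ring

theorem SecondOrderBoundOn.gramDet {E : Type*} [NormedAddCommGroup E]
    [NormedSpace ℝ E] {s : Set E} {G : E → Matrix ι ι ℝ} {B h : ℝ}
    (hG : ∀ i j, SecondOrderBoundOn (fun y => G y i j) s B h) {u v : ι → ℝ}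
    (hu : ∀ i, |u i| ≤ 1) (hv : ∀ i, |v i| ≤ 1) :
    SecondOrderBoundOn (fun y => gramDet (G y) u v) s (6 * (Fintype.card ι ^ 2 * B) ^ 2) h := by
  convert ((dotProduct_mulVec hG hu hu).mul (dotProduct_mulVec hG hv hv)).sub
    ((dotProduct_mulVec hG hu hv).mul (dotProduct_mulVec hG hv hu)) using 1
  · rfl
  · ring

end GramDeterminant

section Area

theorem abs_setIntegral_sqrt_comp_triangleParam_sub_le {E : Type*} [NormedAddCommGroup E]
    [NormedSpace ℝ E] [CompleteSpace E] {p₀ p₁ p₂ : E} {D : E → ℝ} {B h k : ℝ}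
    (hD : SecondOrderBoundOn D (convexHull ℝ {p₀, p₁, p₂}) B h)
    (hcont : ContinuousOn D (convexHull ℝ {p₀, p₁, p₂})) (hk : 0 < k)
    (hlow : ∀ y ∈ convexHull ℝ {p₀, p₁, p₂}, k ^ 2 ≤ D y) :
    |(∫ x in stdTriangle, √(D (triangleParam p₀ p₁ p₂ x))) -
        1 / 2 * √(D (triangleParam p₀ p₁ p₂ (1 / 3, 1 / 3)))| ≤
      (B / (2 * k) + B ^ 2 / (8 * k ^ 3)) / k * h ^ 2 *
        ∫ x in stdTriangle, √(D (triangleParam p₀ p₁ p₂ x)) := by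
  have hmem (x) (hx : x ∈ stdTriangle) := triangleParam_mem_convexHull (p₀ := p₀) (p₁ := p₁)
    (p₂ := p₂) hx
  have hparam : Continuous (triangleParam p₀ p₁ p₂) := by unfold triangleParam; fun_prop
  have hsqrt : ContinuousOn (fun x => √(D (triangleParam p₀ p₁ p₂ x))) stdTriangle :=
    (hcont.comp hparam.continuousOn hmem).sqrt
  have hfin : Fact (volume stdTriangle < ⊤) := ⟨isCompact_stdTriangle.measure_lt_top⟩
  have hmass : (volume.restrict stdTriangle).real Set.univ = 1 / 2 := by
    rw [measureReal_restrict_apply_univ, volume_real_stdTriangle]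
  have hB : 0 ≤ B := (abs_nonneg _).trans (hD.abs_le _ (hmem _ centroid_mem_stdTriangle))
  obtain ⟨L, hL⟩ := hD.exists_linear_sqrt hk hlow (hmem _ centroid_mem_stdTriangle)
  have hrule := abs_integral_comp_sub_le_mul_integral (φ := fun y => √(D y)) (k := k)
    (hparam.continuousOn.integrableOn_compact isCompact_stdTriangle)
    (hsqrt.integrableOn_compact isCompact_stdTriangle)
    (by rw [hmass, ← volume_real_stdTriangle, integral_triangleParam])
    (ae_restrict_of_forall_mem isClosed_stdTriangle.measurableSet fun x hx => hL _ (hmem x hx))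
    (by positivity) hk
    (ae_restrict_of_forall_mem isClosed_stdTriangle.measurableSet fun x hx =>
      Real.le_sqrt_of_sq_le (hlow _ (hmem x hx)))
  rwa [hmass, mul_div_right_comm] at hrule

variable {ι : Type*} [Fintype ι]

/-- The standing assumptions on the metric: `g` is a field of matrices, not necessarily symmetric,
which is `C²` near each point of `s`, and one constant `K` serves there as a bound for the entries
and their first two derivatives and, through its inverse, as an ellipticity constant. -/
structure EllipticC2BoundOn (g : (ι → ℝ) → Matrix ι ι ℝ) (s : Set (ι → ℝ)) (K : ℝ) : Prop where
  contDiffAt : ∀ y ∈ s, ∀ i j, ContDiffAt ℝ 2 (fun z => g z i j) y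
  entries_le : ∀ y ∈ s, ∀ i j, |g y i j| ≤ K ∧ ‖fderiv ℝ (fun z => g z i j) y‖ ≤ K ∧
    ‖iteratedFDeriv ℝ 2 (fun z => g z i j) y‖ ≤ K
  elliptic : ∀ y ∈ s, ∀ v : ι → ℝ, K⁻¹ * ∑ i, v i ^ 2 ≤ v ⬝ᵥ g y *ᵥ v

/-- The pullback `γ` of `g` under `triangleParam p₀ p₁ p₂`. -/
def pullbackMetric (g : (ι → ℝ) → Matrix ι ι ℝ) (p₀ p₁ p₂ : ι → ℝ) (x : ℝ × ℝ) :
    Matrix (Fin 2) (Fin 2) ℝ :=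
  of fun α β => ((if α = 0 then p₁ else p₂) - p₀) ⬝ᵥ
    g (triangleParam p₀ p₁ p₂ x) *ᵥ ((if β = 0 then p₁ else p₂) - p₀)

/-- The area `A(T)` with respect to `g` of the triangle `T` with vertices `p₀, p₁, p₂`. -/
noncomputable def triangleArea (g : (ι → ℝ) → Matrix ι ι ℝ) (p₀ p₁ p₂ : ι → ℝ) : ℝ :=
  ∫ x in stdTriangle, √(pullbackMetric g p₀ p₁ p₂ x).det

/-- The discrete area `Â(T)`, which evaluates the area density only at the centroid. -/
noncomputable def discreteTriangleArea (g : (ι → ℝ) → Matrix ι ι ℝ) (p₀ p₁ p₂ : ι → ℝ) : ℝ :=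
  1 / 2 * √(pullbackMetric g p₀ p₁ p₂ (1 / 3, 1 / 3)).det

theorem det_pullbackMetric (g : (ι → ℝ) → Matrix ι ι ℝ) (p₀ p₁ p₂ : ι → ℝ) (x : ℝ × ℝ) :
    (pullbackMetric g p₀ p₁ p₂ x).det =
      gramDet (g (triangleParam p₀ p₁ p₂ x)) (p₁ - p₀) (p₂ - p₀) :=
  det_fin_two _

theorem EllipticC2BoundOn.continuousOn_gramDet {g : (ι → ℝ) → Matrix ι ι ℝ} {s : Set (ι → ℝ)}
    {K : ℝ} (hg : EllipticC2BoundOn g s K) (u v : ι → ℝ) :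
    ContinuousOn (fun y => gramDet (g y) u v) s := by
  have hentry (i j : ι) : ContinuousOn (fun y => g y i j) s := fun y hy =>
    (hg.contDiffAt y hy i j).continuousAt.continuousWithinAt
  simp only [gramDet, dotProduct, mulVec]
  fun_prop

theorem EllipticC2BoundOn.secondOrderBoundOn_gramDet {g : (ι → ℝ) → Matrix ι ι ℝ}
    {s : Set (ι → ℝ)} {K : ℝ} (hg : EllipticC2BoundOn g s K) (hs : Convex ℝ s)
    (hbdd : Bornology.IsBounded s) {e f : ι → ℝ} (he : e ⬝ᵥ e = 1) (hf : f ⬝ᵥ f = 1) :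
    SecondOrderBoundOn (fun y => gramDet (g y) e f) s (6 * (Fintype.card ι ^ 2 * K) ^ 2)
      (diam s) :=
  .gramDet (fun i j => .of_contDiffAt hs hbdd (fun y hy => hg.contDiffAt y hy i j)
      (fun y hy => (hg.entries_le y hy i j).1) (fun y hy => (hg.entries_le y hy i j).2.1)
      (fun y hy => (hg.entries_le y hy i j).2.2))
    (abs_apply_le_one_of_dotProduct_self_eq_one he) (abs_apply_le_one_of_dotProduct_self_eq_one hf)

theorem discrete_area_error_bound_general [Nonempty ι] {K : ℝ} (hK : 0 < K) :
    ∃ c₀ : ℝ, 0 < c₀ ∧ ∀ (g : (ι → ℝ) → Matrix ι ι ℝ) (p₀ p₁ p₂ : ι → ℝ),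
      EllipticC2BoundOn g (convexHull ℝ {p₀, p₁, p₂}) K →
        |triangleArea g p₀ p₁ p₂ - discreteTriangleArea g p₀ p₁ p₂| ≤
          c₀ * diam (convexHull ℝ {p₀, p₁, p₂}) ^ 2 * triangleArea g p₀ p₁ p₂ := by
  obtain ⟨B, hB⟩ : ∃ B : ℝ, B = 6 * (Fintype.card ι ^ 2 * K) ^ 2 := ⟨_, rfl⟩
  refine ⟨(B / (2 * K⁻¹) + B ^ 2 / (8 * K⁻¹ ^ 3)) / K⁻¹, by rw [hB]; positivity,
    fun g p₀ p₁ p₂ hg => ?_⟩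
  simp only [triangleArea, discreteTriangleArea, det_pullbackMetric]
  obtain hzero | ⟨r, e, f, he, hf, hef, hr⟩ :=
    gramDet_eq_zero_or_exists_orthonormal (p₁ - p₀) (p₂ - p₀)
  · simp [hzero]
  have hbdd : Bornology.IsBounded (convexHull ℝ {p₀, p₁, p₂}) :=
    isBounded_convexHull.2 (Set.toFinite _).isBounded
  have hlow (y) (hy : y ∈ convexHull ℝ {p₀, p₁, p₂}) : K⁻¹ ^ 2 ≤ gramDet (g y) e f :=
    sq_le_gramDet_of_orthonormal (inv_nonneg.2 hK.le)
      (fun v => by simpa only [dotProduct, sq] using hg.elliptic y hy v) he hf hef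
  have horth := abs_setIntegral_sqrt_comp_triangleParam_sub_le
    (hB ▸ hg.secondOrderBoundOn_gramDet (convex_convexHull ℝ _) hbdd he hf)
    (hg.continuousOn_gramDet e f) (inv_pos.2 hK) hlow
  have hscale (y : ι → ℝ) :
      √(gramDet (g y) (p₁ - p₀) (p₂ - p₀)) = |r| * √(gramDet (g y) e f) := by
    rw [hr, Real.sqrt_mul (sq_nonneg r), Real.sqrt_sq_eq_abs]
  simp only [hscale, integral_const_mul]
  rw [mul_left_comm (1 / 2), ← mul_sub, abs_mul, abs_abs, mul_left_comm _ |r|]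
  exact mul_le_mul_of_nonneg_left horth (abs_nonneg r)

end Area

/-- Centroid-rule error estimate for the discrete area: for a `C²` Riemannian
metric `g` on a neighborhood of a triangle `T = Δ(p₀,p₁,p₂) ⊂ ℝ³` of Euclidean
diameter `h`, with `γ(x)` the pullback of `g` under the affine parametrization of
`T` over the standard triangle `T_S`, the true area `A(T) = ∫_{T_S} √(det γ) dx`
and the discrete area `Â(T) = (1/2)√(det γ(1/3,1/3))` satisfy
`|A(T) − Â(T)| ≤ c₀ h² A(T)` with `c₀` depending only on bounds `K` for `g`, its
first two derivatives, and its ellipticity on `T`. -/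
theorem discrete_area_error_bound
    (g : (Fin 3 → ℝ) → Matrix (Fin 3) (Fin 3) ℝ)
    (hg : ∀ i j, ContDiff ℝ 2 (fun y => g y i j)) :
    ∀ K : ℝ, 0 < K → ∃ c₀ : ℝ, 0 < c₀ ∧
      ∀ (p₀ p₁ p₂ : Fin 3 → ℝ) (h : ℝ)
        (hh : h = Metric.diam (convexHull ℝ {p₀, p₁, p₂}))
        (hbound : ∀ y ∈ convexHull ℝ {p₀, p₁, p₂},
          (∀ i j, |g y i j| ≤ K ∧
            ‖fderiv ℝ (fun z => g z i j) y‖ ≤ K ∧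
            ‖iteratedFDeriv ℝ 2 (fun z => g z i j) y‖ ≤ K) ∧
          (∀ v : Fin 3 → ℝ, K⁻¹ * (∑ i, v i ^ 2) ≤ v ⬝ᵥ (g y).mulVec v))
        (F : ℝ × ℝ → Fin 3 → ℝ)
        (hF : ∀ x : ℝ × ℝ, F x = fun i =>
          (1 - x.1 - x.2) * p₀ i + x.1 * p₁ i + x.2 * p₂ i)
        (γ : ℝ × ℝ → Matrix (Fin 2) (Fin 2) ℝ)
        (hγ : ∀ x α β, γ x α β =
          (fun i => (if α = 0 then p₁ else p₂) i - p₀ i) ⬝ᵥ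
            (g (F x)).mulVec (fun i => (if β = 0 then p₁ else p₂) i - p₀ i))
        (A Adisc : ℝ)
        (hA : A = ∫ x in {x : ℝ × ℝ | 0 ≤ x.1 ∧ 0 ≤ x.2 ∧ x.1 + x.2 ≤ 1},
          Real.sqrt (γ x).det)
        (hAdisc : Adisc = (1/2) * Real.sqrt (γ (1/3, 1/3)).det),
        |A - Adisc| ≤ c₀ * h ^ 2 * A := by
  intro K hK
  obtain ⟨c₀, hc₀, hmain⟩ := discrete_area_error_bound_general (ι := Fin 3) hK
  refine ⟨c₀, hc₀, ?_⟩
  rintro p₀ p₁ p₂ _ rfl hbound F hF γ hγ _ _ rfl rfl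
  obtain rfl : F = triangleParam p₀ p₁ p₂ := funext hF
  obtain rfl : γ = pullbackMetric g p₀ p₁ p₂ := funext fun x => Matrix.ext (hγ x)
  exact hmain g p₀ p₁ p₂ ⟨fun y _ i j => (hg i j).contDiffAt, fun y hy => (hbound y hy).1,
    fun y hy => (hbound y hy).2⟩
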